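/- Let Z₁ ~ N(0,1), μ* ∈ ℝⁿ with ‖μ*‖ = 1, and φ : ℝ → ℝ be C² with polynomial growth together with its derivatives. Let A = E[(φ'(⟨Z, μ*⟩))² Z Zᵀ], where Z ~ N(0, Iₙ). Then the minimum eigenvalue of A equals min{ E[(φ'(Z₁))²], E[(Z₁ φ'(Z₁))²] }. -/

import Mathlib

open MeasureTheory

/-- The standard Gaussian measure `N(0, Iₙ)` on `ℝⁿ`. -/
noncomputable def stdGaussian (n : ℕ) : Measure (Fin n → ℝ) :=
  Measure.pi fun _ => ProbabilityTheory.gaussianReal 0 1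

/-!
The component `⟪μ, Z⟫` of a standard Gaussian vector along a unit vector `μ` is independent of the
component of `Z` orthogonal to `μ`, so integrating the weight `w ⟪μ, Z⟫` against `Z Zᵀ` gives
`α (1 - P) + β P`, where `P = μ μᵀ`, `α = E[w(Z₁)]` and `β = E[Z₁² w(Z₁)]`. As `P` is an
idempotent other than `0` and `1`, the spectrum of this matrix is `{α, β}`.
-/

section Spectrum

variable {𝕜 R : Type*} [Field 𝕜] [Ring R] [Algebra 𝕜 R] {p : R}

lemma spectrum_eq_of_isIdempotentElem (hp : IsIdempotentElem p) (h0 : p ≠ 0) (h1 : p ≠ 1) :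
    spectrum 𝕜 p = {0, 1} := by
  refine (hp.spectrum_subset 𝕜).antisymm (Set.pair_subset ?_ ?_)
  · exact spectrum.zero_mem 𝕜 fun h => h1 ((IsIdempotentElem.iff_eq_one_of_isUnit h).1 hp)
  · rw [spectrum.mem_iff, map_one]
    intro h
    exact h0 (by simpa using (IsIdempotentElem.iff_eq_one_of_isUnit h).1 hp.one_sub)

lemma spectrum_smul_one_sub_add_smul (hp : IsIdempotentElem p) (h0 : p ≠ 0) (h1 : p ≠ 1)
    (a b : 𝕜) : spectrum 𝕜 (a • (1 - p) + b • p) = {a, b} := by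
  have : Nontrivial R := ⟨p, 0, h0⟩
  have hspec : spectrum 𝕜 p = {0, 1} := spectrum_eq_of_isIdempotentElem hp h0 h1
  have hshift : a • (1 - p) + b • p = algebraMap 𝕜 R a + (b - a) • p := by
    rw [Algebra.algebraMap_eq_smul_one]; module
  rw [hshift, ← spectrum.singleton_add_eq, spectrum.smul_eq_smul _ _ (by simp [hspec]), hspec]
  simp only [Set.smul_set_insert, Set.smul_set_singleton, Set.singleton_add, Set.image_pair,
    smul_eq_mul, mul_zero, mul_one, add_zero, add_sub_cancel]

end Spectrum

section RankOne

open Matrix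

variable {ι R : Type*} [CommRing R]

lemma vecMulVec_ne_one [DecidableEq ι] [Nontrivial R] [Nontrivial ι] (u v : ι → R) :
    vecMulVec u v ≠ 1 := by
  intro h
  obtain ⟨i, j, hij⟩ := exists_pair_ne ι
  have hentry (k l : ι) : u k * v l = (1 : Matrix ι ι R) k l := congrFun₂ h k l
  refine one_ne_zero (α := R) ?_
  calc (1 : R) = u i * v i * (u j * v j) := by simp only [hentry, one_apply_eq, mul_one]
    _ = u i * v j * (u j * v i) := by ring
    _ = 0 := by rw [hentry, one_apply_ne hij, zero_mul]

variable [Fintype ι]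

lemma isIdempotentElem_vecMulVec {u v : ι → R} (h : v ⬝ᵥ u = 1) :
    IsIdempotentElem (vecMulVec u v) := by
  rw [IsIdempotentElem, vecMulVec_mul_vecMulVec, h, one_smul]

lemma vecMulVec_ne_zero_of_dotProduct_eq_one [Nontrivial R] {u v : ι → R} (h : u ⬝ᵥ v = 1) :
    vecMulVec u v ≠ 0 := by
  intro h0
  have htrace := trace_vecMulVec u v
  rw [h0, trace_zero, h] at htrace
  exact zero_ne_one htrace

lemma iInf_eigenvalues_smul_one_sub_add_smul_vecMulVec [DecidableEq ι] [Nontrivial ι] {m : ι → ℝ}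
    (hm : m ⬝ᵥ m = 1) {a b : ℝ}
    (hA : (a • (1 - vecMulVec m m) + b • vecMulVec m m).IsHermitian) :
    ⨅ i, hA.eigenvalues i = min a b := by
  rw [← sInf_range, ← hA.spectrum_real_eq_range_eigenvalues,
    spectrum_smul_one_sub_add_smul (isIdempotentElem_vecMulVec hm)
      (vecMulVec_ne_zero_of_dotProduct_eq_one hm) (vecMulVec_ne_one m m), csInf_pair]

end RankOne

section Gaussian

open ProbabilityTheory

open scoped RealInnerProductSpace

section Integrability

variable {E F : Type*} [NormedAddCommGroup E] [NormedSpace ℝ E] [CompleteSpace E]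
  [SecondCountableTopology E] [MeasurableSpace E] [BorelSpace E] [NormedAddCommGroup F]

lemma integrable_of_norm_le_pow {μ : Measure E} [IsGaussian μ] {f : E → F}
    (hf : AEStronglyMeasurable f μ) {C : ℝ} {N : ℕ} (hbound : ∀ x, ‖f x‖ ≤ C * (1 + ‖x‖) ^ N) :
    Integrable f μ := by
  have hmoment : MemLp (fun x : E => 1 + ‖x‖) N μ :=
    (memLp_const (1 : ℝ)).add (IsGaussian.memLp_id μ N (ENNReal.natCast_ne_top N)).norm
  refine (hmoment.integrable_norm_pow'.const_mul C).mono' hf (.of_forall fun x => ?_)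
  simpa only [Real.norm_of_nonneg (by positivity : 0 ≤ 1 + ‖x‖)] using hbound x

lemma integrable_pow_mul_sq_of_abs_le_pow {μ : Measure ℝ} [IsGaussian μ] {f : ℝ → ℝ}
    (hf : AEStronglyMeasurable f μ) {C : ℝ} {p : ℕ} (hbound : ∀ t, |f t| ≤ C * (1 + |t|) ^ p)
    (k : ℕ) : Integrable (fun t => t ^ k * f t ^ 2) μ := by
  refine integrable_of_norm_le_pow (C := C ^ 2) (N := k + p * 2) (by fun_prop) fun t => ?_
  calc ‖t ^ k * f t ^ 2‖ = |t| ^ k * |f t| ^ 2 := by simp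
    _ ≤ (1 + |t|) ^ k * (C * (1 + |t|) ^ p) ^ 2 := by
      gcongr
      · linarith
      · exact hbound t
    _ = C ^ 2 * (1 + |t|) ^ (k + p * 2) := by ring

end Integrability

lemma integrable_id_mul_of_integrable_sq_mul {μ : Measure ℝ} {w : ℝ → ℝ} (hw : Integrable w μ)
    (hw₂ : Integrable (fun t => t ^ 2 * w t) μ) : Integrable (fun t => t * w t) μ := by
  refine (hw.norm.add hw₂.norm).mono' (by fun_prop) (.of_forall fun t => ?_)
  calc ‖t * w t‖ = |t| * |w t| := abs_mul t (w t)
    _ ≤ (1 + t ^ 2) * |w t| := by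
      gcongr
      nlinarith [sq_abs t, sq_nonneg (|t| - 1), sq_nonneg t]
    _ = ‖w t‖ + ‖t ^ 2 * w t‖ := by
      rw [Real.norm_eq_abs, norm_mul, norm_pow, Real.norm_eq_abs, Real.norm_eq_abs, sq_abs]; ring

lemma exists_inner_eq_zero_and_eq_smul_add {E : Type*} [NormedAddCommGroup E]
    [InnerProductSpace ℝ E] (m u : E) : ∃ (c : ℝ) (a : E), ⟪m, a⟫ = 0 ∧ u = c • m + a := by
  obtain ⟨y, hy, a, ha, rfl⟩ := (ℝ ∙ m).exists_add_mem_mem_orthogonal u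
  obtain ⟨c, rfl⟩ := Submodule.mem_span_singleton.1 hy
  exact ⟨c, a, Submodule.mem_orthogonal_singleton_iff_inner_right.1 ha, rfl⟩

section StdGaussian

variable {E : Type*} [NormedAddCommGroup E] [InnerProductSpace ℝ E] [FiniteDimensional ℝ E]
  [MeasurableSpace E] [BorelSpace E]

lemma memLp_two_inner_stdGaussian (u : E) :
    MemLp (fun z => ⟪u, z⟫) 2 (ProbabilityTheory.stdGaussian E) :=
  IsGaussian.memLp_dual _ (innerSL ℝ u) 2 (by simp)

lemma integrable_inner_stdGaussian (u : E) :
    Integrable (fun z => ⟪u, z⟫) (ProbabilityTheory.stdGaussian E) :=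
  IsGaussian.integrable_dual _ (innerSL ℝ u)

lemma integral_inner_stdGaussian (u : E) : ∫ z, ⟪u, z⟫ ∂ProbabilityTheory.stdGaussian E = 0 :=
  integral_strongDual_stdGaussian (innerSL ℝ u)

lemma covariance_inner_stdGaussian (u v : E) :
    cov[fun z => ⟪u, z⟫, fun z => ⟪v, z⟫; ProbabilityTheory.stdGaussian E] = ⟪u, v⟫ := by
  rw [← covarianceBilin_apply_eq_cov IsGaussian.memLp_two_id, covarianceBilin_stdGaussian]
  exact innerSL_apply_apply ℝ u v

lemma integral_inner_mul_inner_stdGaussian (u v : E) :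
    ∫ z, ⟪u, z⟫ * ⟪v, z⟫ ∂ProbabilityTheory.stdGaussian E = ⟪u, v⟫ := by
  have h := covariance_inner_stdGaussian u v
  rw [covariance_eq_sub (memLp_two_inner_stdGaussian u) (memLp_two_inner_stdGaussian v)] at h
  simpa [integral_inner_stdGaussian] using h

lemma map_inner_stdGaussian {m : E} (hm : ‖m‖ = 1) :
    (ProbabilityTheory.stdGaussian E).map (fun z => ⟪m, z⟫) = gaussianReal 0 1 := by
  have h := IsGaussian.map_eq_gaussianReal (μ := ProbabilityTheory.stdGaussian E) (innerSL ℝ m)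
  rw [integral_strongDual_stdGaussian, variance_dual_stdGaussian, innerSL_apply_norm, hm] at h
  simpa using h

lemma indepFun_inner_stdGaussian {ι κ : Type*} [Finite ι] [Finite κ] {a : ι → E} {b : κ → E}
    (hab : ∀ i j, ⟪a i, b j⟫ = 0) :
    IndepFun (fun z i => ⟪a i, z⟫) (fun z j => ⟪b j, z⟫) (ProbabilityTheory.stdGaussian E) := by
  have := Fintype.ofFinite ι
  have := Fintype.ofFinite κ
  let L : E →L[ℝ] (ι → ℝ) × (κ → ℝ) :=
    (ContinuousLinearMap.pi fun i => innerSL ℝ (a i)).prod (.pi fun j => innerSL ℝ (b j))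
  have hjoint : HasGaussianLaw (fun z => (fun i => ⟪a i, z⟫, fun j => ⟪b j, z⟫))
      (ProbabilityTheory.stdGaussian E) :=
    IsGaussian.hasGaussianLaw_id.map (L := L)
  exact hjoint.indepFun_of_covariance_eval fun i j => by
    rw [covariance_inner_stdGaussian, hab]

section Weighted

variable {m : E} {w : ℝ → ℝ}

lemma integrable_comp_inner_stdGaussian (hm : ‖m‖ = 1) (hw : Integrable w (gaussianReal 0 1)) :
    Integrable (fun z => w ⟪m, z⟫) (ProbabilityTheory.stdGaussian E) := by
  rw [← map_inner_stdGaussian hm] at hw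
  exact hw.comp_measurable (by fun_prop)

lemma integral_comp_inner_stdGaussian (hm : ‖m‖ = 1)
    (hw : AEStronglyMeasurable w (gaussianReal 0 1)) :
    ∫ z, w ⟪m, z⟫ ∂ProbabilityTheory.stdGaussian E = ∫ t, w t ∂gaussianReal 0 1 := by
  rw [← map_inner_stdGaussian hm] at hw ⊢
  exact (integral_map (by fun_prop) hw).symm

lemma indepFun_comp_inner_stdGaussian (hm : ‖m‖ = 1) (hw : AEMeasurable w (gaussianReal 0 1))
    {κ : Type*} [Finite κ] {b : κ → E} (hb : ∀ j, ⟪m, b j⟫ = 0)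
    {g : (κ → ℝ) → ℝ} (hg : Measurable g) :
    IndepFun (fun z => w ⟪m, z⟫) (fun z => g fun j => ⟪b j, z⟫)
      (ProbabilityTheory.stdGaussian E) := by
  have hindep : IndepFun (fun z => ⟪m, z⟫) (fun z j => ⟪b j, z⟫)
      (ProbabilityTheory.stdGaussian E) :=
    (indepFun_inner_stdGaussian (a := fun _ : Unit => m) fun _ => hb).comp
      (measurable_pi_apply ()) measurable_id
  rw [← map_inner_stdGaussian hm] at hw
  exact hindep.comp₀ (by fun_prop) (by fun_prop) hw hg.aemeasurable

variable {a b : E}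

lemma indepFun_comp_inner_inner_stdGaussian (hm : ‖m‖ = 1)
    (hw : AEMeasurable w (gaussianReal 0 1)) (ha : ⟪m, a⟫ = 0) :
    IndepFun (fun z => w ⟪m, z⟫) (fun z => ⟪a, z⟫) (ProbabilityTheory.stdGaussian E) :=
  indepFun_comp_inner_stdGaussian hm hw (fun _ : Unit => ha) (measurable_pi_apply ())

lemma indepFun_comp_inner_inner_mul_inner_stdGaussian (hm : ‖m‖ = 1)
    (hw : AEMeasurable w (gaussianReal 0 1)) (ha : ⟪m, a⟫ = 0) (hb : ⟪m, b⟫ = 0) :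
    IndepFun (fun z => w ⟪m, z⟫) (fun z => ⟪a, z⟫ * ⟪b, z⟫) (ProbabilityTheory.stdGaussian E) :=
  indepFun_comp_inner_stdGaussian hm hw (b := ![a, b]) (Fin.forall_fin_two.2 ⟨ha, hb⟩)
    (g := fun y => y 0 * y 1) (by fun_prop)

lemma integrable_comp_inner_mul_inner_stdGaussian_of_inner_eq_zero (hm : ‖m‖ = 1)
    (hw : Integrable w (gaussianReal 0 1)) (ha : ⟪m, a⟫ = 0) :
    Integrable (fun z => w ⟪m, z⟫ * ⟪a, z⟫) (ProbabilityTheory.stdGaussian E) :=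
  (indepFun_comp_inner_inner_stdGaussian hm hw.aemeasurable ha).integrable_mul
    (integrable_comp_inner_stdGaussian hm hw) (integrable_inner_stdGaussian a)

lemma integral_comp_inner_mul_inner_stdGaussian_of_inner_eq_zero (hm : ‖m‖ = 1)
    (hw : Integrable w (gaussianReal 0 1)) (ha : ⟪m, a⟫ = 0) :
    ∫ z, w ⟪m, z⟫ * ⟪a, z⟫ ∂ProbabilityTheory.stdGaussian E = 0 := by
  rw [(indepFun_comp_inner_inner_stdGaussian hm hw.aemeasurable ha).integral_fun_mul_eq_mul_integral
      (integrable_comp_inner_stdGaussian hm hw).aestronglyMeasurable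
      (integrable_inner_stdGaussian a).aestronglyMeasurable,
    integral_inner_stdGaussian, mul_zero]

lemma integrable_comp_inner_mul_inner_mul_inner_stdGaussian_of_inner_eq_zero (hm : ‖m‖ = 1)
    (hw : Integrable w (gaussianReal 0 1)) (ha : ⟪m, a⟫ = 0) (hb : ⟪m, b⟫ = 0) :
    Integrable (fun z => w ⟪m, z⟫ * (⟪a, z⟫ * ⟪b, z⟫)) (ProbabilityTheory.stdGaussian E) :=
  (indepFun_comp_inner_inner_mul_inner_stdGaussian hm hw.aemeasurable ha hb).integrable_mul
    (integrable_comp_inner_stdGaussian hm hw)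
    ((memLp_two_inner_stdGaussian a).integrable_mul (memLp_two_inner_stdGaussian b))

lemma integral_comp_inner_mul_inner_mul_inner_stdGaussian_of_inner_eq_zero (hm : ‖m‖ = 1)
    (hw : Integrable w (gaussianReal 0 1)) (ha : ⟪m, a⟫ = 0) (hb : ⟪m, b⟫ = 0) :
    ∫ z, w ⟪m, z⟫ * (⟪a, z⟫ * ⟪b, z⟫) ∂ProbabilityTheory.stdGaussian E
      = (∫ t, w t ∂gaussianReal 0 1) * ⟪a, b⟫ := by
  rw [(indepFun_comp_inner_inner_mul_inner_stdGaussian hm hw.aemeasurable ha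
      hb).integral_fun_mul_eq_mul_integral
      (integrable_comp_inner_stdGaussian hm hw).aestronglyMeasurable
      ((memLp_two_inner_stdGaussian a).integrable_mul
        (memLp_two_inner_stdGaussian b)).aestronglyMeasurable,
    integral_comp_inner_stdGaussian hm hw.aestronglyMeasurable,
    integral_inner_mul_inner_stdGaussian]

lemma integral_comp_inner_mul_inner_mul_inner_stdGaussian (hm : ‖m‖ = 1)
    (hw : Integrable w (gaussianReal 0 1))
    (hw₂ : Integrable (fun t => t ^ 2 * w t) (gaussianReal 0 1)) (u v : E) :
    ∫ z, w ⟪m, z⟫ * ⟪u, z⟫ * ⟪v, z⟫ ∂ProbabilityTheory.stdGaussian E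
      = (∫ t, w t ∂gaussianReal 0 1) * (⟪u, v⟫ - ⟪m, u⟫ * ⟪m, v⟫)
        + (∫ t, t ^ 2 * w t ∂gaussianReal 0 1) * (⟪m, u⟫ * ⟪m, v⟫) := by
  have hw₁ := integrable_id_mul_of_integrable_sq_mul hw hw₂
  have hmm : ⟪m, m⟫ = 1 := by rw [real_inner_self_eq_norm_sq, hm, one_pow]
  obtain ⟨c, a, ha, rfl⟩ := exists_inner_eq_zero_and_eq_smul_add m u
  obtain ⟨d, b, hb, rfl⟩ := exists_inner_eq_zero_and_eq_smul_add m v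
  have hexpand : ∀ z, w ⟪m, z⟫ * ⟪c • m + a, z⟫ * ⟪d • m + b, z⟫
      = c * d * (⟪m, z⟫ ^ 2 * w ⟪m, z⟫) + c * (⟪m, z⟫ * w ⟪m, z⟫ * ⟪b, z⟫)
        + d * (⟪m, z⟫ * w ⟪m, z⟫ * ⟪a, z⟫) + w ⟪m, z⟫ * (⟪a, z⟫ * ⟪b, z⟫) := fun z => by
    simp only [inner_add_left, real_inner_smul_left]; ring
  have h₁ := (integrable_comp_inner_stdGaussian hm hw₂).const_mul (c * d)
  have h₂ := (integrable_comp_inner_mul_inner_stdGaussian_of_inner_eq_zero hm hw₁ hb).const_mul c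
  have h₃ := (integrable_comp_inner_mul_inner_stdGaussian_of_inner_eq_zero hm hw₁ ha).const_mul d
  have h₄ := integrable_comp_inner_mul_inner_mul_inner_stdGaussian_of_inner_eq_zero hm hw ha hb
  simp_rw [hexpand]
  rw [integral_add ((h₁.fun_add h₂).fun_add h₃) h₄, integral_add (h₁.fun_add h₂) h₃,
    integral_add h₁ h₂, integral_const_mul, integral_const_mul, integral_const_mul,
    integral_comp_inner_stdGaussian hm hw₂.aestronglyMeasurable,
    integral_comp_inner_mul_inner_stdGaussian_of_inner_eq_zero hm hw₁ hb,
    integral_comp_inner_mul_inner_stdGaussian_of_inner_eq_zero hm hw₁ ha,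
    integral_comp_inner_mul_inner_mul_inner_stdGaussian_of_inner_eq_zero hm hw ha hb]
  simp only [inner_add_left, inner_add_right, real_inner_smul_left, real_inner_smul_right, hmm, ha,
    hb, real_inner_comm m a]
  ring

end Weighted

end StdGaussian

section Coordinates

open Matrix

variable {ι : Type*} [Fintype ι] [DecidableEq ι]

lemma integral_comp_dotProduct_mul_mul_pi_gaussianReal {m : ι → ℝ} (hm : m ⬝ᵥ m = 1) {w : ℝ → ℝ}
    (hw : Integrable w (gaussianReal 0 1))
    (hw₂ : Integrable (fun t => t ^ 2 * w t) (gaussianReal 0 1)) (k l : ι) :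
    ∫ z, w (z ⬝ᵥ m) * z k * z l ∂Measure.pi (fun _ => gaussianReal 0 1)
      = ((∫ t, w t ∂gaussianReal 0 1) • (1 - vecMulVec m m)
        + (∫ t, t ^ 2 * w t ∂gaussianReal 0 1) • vecMulVec m m) k l := by
  have hnorm : ‖WithLp.toLp 2 m‖ = 1 := by
    rw [norm_eq_sqrt_real_inner, EuclideanSpace.inner_toLp_toLp, star_trivial, hm, Real.sqrt_one]
  have h := integral_comp_inner_mul_inner_mul_inner_stdGaussian hnorm hw hw₂
    (EuclideanSpace.single k 1) (EuclideanSpace.single l 1)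
  rw [← map_pi_eq_stdGaussian, ← MeasurableEquiv.coe_toLp, integral_map_equiv] at h
  simp only [MeasurableEquiv.coe_toLp, EuclideanSpace.inner_toLp_toLp] at h
  simpa [EuclideanSpace.inner_single_left, EuclideanSpace.inner_single_right, vecMulVec_apply,
    one_apply, eq_comm] using h

theorem stmt_8_general [Nontrivial ι] {m : ι → ℝ} (hm : ∑ i, m i ^ 2 = 1)
    {w : ℝ → ℝ} (hw : Integrable w (gaussianReal 0 1))
    (hw₂ : Integrable (fun t => t ^ 2 * w t) (gaussianReal 0 1)) {A : Matrix ι ι ℝ}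
    (hA : A = Matrix.of fun k l => ∫ z : ι → ℝ, w (∑ i, z i * m i) * z k * z l
        ∂Measure.pi fun _ => gaussianReal 0 1)
    (hHerm : A.IsHermitian) :
    ⨅ i, hHerm.eigenvalues i
      = min (∫ t, w t ∂gaussianReal 0 1) (∫ t, t ^ 2 * w t ∂gaussianReal 0 1) := by
  have hunit : m ⬝ᵥ m = 1 := by simpa only [dotProduct, ← pow_two] using hm
  obtain rfl : A = (∫ t, w t ∂gaussianReal 0 1) • (1 - vecMulVec m m)
      + (∫ t, t ^ 2 * w t ∂gaussianReal 0 1) • vecMulVec m m := by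
    rw [hA]
    ext k l
    exact integral_comp_dotProduct_mul_mul_pi_gaussianReal hunit hw hw₂ k l
  exact iInf_eigenvalues_smul_one_sub_add_smul_vecMulVec hunit hHerm

end Coordinates

end Gaussian

/-- For a unit vector `μ*` and `φ ∈ C²` of polynomial growth, the minimum eigenvalue of
`A = E[(φ'(⟨Z, μ*⟩))² Z Zᵀ]` (with `Z ~ N(0, Iₙ)`) equals
`min{E[(φ'(Z₁))²], E[(Z₁ φ'(Z₁))²]}` where `Z₁ ~ N(0,1)`. -/
theorem stmt_8 (n : ℕ) (hn : 2 ≤ n) (μstar : Fin n → ℝ)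
    (hμ : ∑ i, μstar i ^ 2 = 1)
    (φ : ℝ → ℝ) (hφ : ContDiff ℝ 2 φ)
    (C : ℝ) (p : ℕ)
    (hgrowth : ∀ x : ℝ,
      |φ x| + |deriv φ x| + |deriv (deriv φ) x| ≤ C * (1 + |x|) ^ p)
    (A : Matrix (Fin n) (Fin n) ℝ)
    (hA : A = Matrix.of fun k l =>
        ∫ z, (deriv φ (∑ i, z i * μstar i)) ^ 2 * z k * z l ∂stdGaussian n)
    (hHerm : A.IsHermitian) :
    haveI : Nonempty (Fin n) := ⟨⟨0, by omega⟩⟩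
    (⨅ i : Fin n, hHerm.eigenvalues i)
      = min (∫ t, (deriv φ t) ^ 2 ∂ProbabilityTheory.gaussianReal 0 1)
          (∫ t, (t * deriv φ t) ^ 2 ∂ProbabilityTheory.gaussianReal 0 1) := by
  have : Nontrivial (Fin n) := Fin.nontrivial_iff_two_le.2 hn
  have hbound : ∀ t, |deriv φ t| ≤ C * (1 + |t|) ^ p := fun t => by
    linarith [hgrowth t, abs_nonneg (φ t), abs_nonneg (deriv (deriv φ) t)]
  have hint := integrable_pow_mul_sq_of_abs_le_pow (μ := ProbabilityTheory.gaussianReal 0 1)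
    (hφ.continuous_deriv (by norm_num)).aestronglyMeasurable hbound
  simpa only [mul_pow] using
    stmt_8_general (w := fun t => deriv φ t ^ 2) hμ (by simpa using hint 0) (hint 2) hA hHerm
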